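/- Let d ∈ ℕ and σ > 0, and let γ_σ be the Gaussian probability measure on ℝ^d with density (2πσ)^{−d/2} e^{−|y|²/(2σ)} with respect to the Lebesgue measure. Then for every smooth f : ℝ^d → (0,∞) such that f, f ln f and |∇f|²/f are integrable with respect to γ_σ, one has Ent_{γ_σ}(f) ≤ (σ/2) ∫ (|∇f|²/f) dγ_σ, where Ent_{γ_σ}(f) = ∫ f ln f dγ_σ − (∫ f dγ_σ) ln(∫ f dγ_σ). -/

import Mathlib

noncomputable section

open MeasureTheory

/-- The Gaussian measure on ℝ^d with density (2πσ)^{−d/2} e^{−|y|²/(2σ)}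
with respect to the Lebesgue measure. -/
def gaussMeasure (d : ℕ) (σ : ℝ) : Measure (EuclideanSpace ℝ (Fin d)) :=
  volume.withDensity fun y =>
    ENNReal.ofReal ((2 * Real.pi * σ) ^ (-(d : ℝ) / 2) * Real.exp (-‖y‖ ^ 2 / (2 * σ)))

namespace GaussLSI

open ProbabilityTheory Filter Topology
open scoped RealInnerProductSpace

lemma isProb (d : ℕ) {σ : ℝ} (hσ : 0 < σ) : IsProbabilityMeasure (gaussMeasure d σ) := by
  constructor
  have hb : 0 < 1 / (2 * σ) := by positivity
  have h := GaussianFourier.integral_rexp_neg_mul_sq_norm (V := EuclideanSpace ℝ (Fin d)) hb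
  have hpi : (Real.pi / (1 / (2 * σ))) = 2 * Real.pi * σ := by field_simp
  rw [hpi, finrank_euclideanSpace_fin] at h
  have hp : 0 < 2 * Real.pi * σ := by positivity
  have hint : Integrable (fun v : EuclideanSpace ℝ (Fin d) => Real.exp (-(1 / (2 * σ)) * ‖v‖ ^ 2)) := by
    by_contra hc
    rw [integral_undef hc] at h
    have : 0 < (2 * Real.pi * σ) ^ ((d : ℝ) / 2) := by positivity
    linarith
  have e : (fun v : EuclideanSpace ℝ (Fin d) => Real.exp (-‖v‖ ^ 2 / (2 * σ))) =
      fun v => Real.exp (-(1 / (2 * σ)) * ‖v‖ ^ 2) := by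
    ext v; congr 1; field_simp
  rw [gaussMeasure, withDensity_apply _ MeasurableSet.univ, Measure.restrict_univ,
    ← ofReal_integral_eq_lintegral_ofReal]
  · rw [integral_const_mul, e, h, ← Real.rpow_add hp]
    ring_nf; simp
  · rw [← e] at hint
    exact hint.const_mul _
  · exact ae_of_all _ fun v => by positivity

lemma charFun_gauss (d : ℕ) {σ : ℝ} (hσ : 0 < σ) (t : EuclideanSpace ℝ (Fin d)) :
    charFun (gaussMeasure d σ) t = Complex.exp (-(σ * ‖t‖ ^ 2 / 2)) := by
  have hb : 0 < ((1 / (2 * σ) : ℝ) : ℂ).re := by rw [Complex.ofReal_re]; positivity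
  have h := GaussianFourier.integral_cexp_neg_mul_sq_norm_add hb Complex.I t
  have hp : 0 < 2 * Real.pi * σ := by positivity
  have hpi : (Real.pi / ((1 / (2 * σ) : ℝ) : ℂ)) = ((2 * Real.pi * σ : ℝ) : ℂ) := by
    push_cast; field_simp
  rw [hpi, finrank_euclideanSpace_fin] at h
  rw [charFun_apply, gaussMeasure, integral_withDensity_eq_integral_toReal_smul (by fun_prop) (by simp)]
  have e : ∀ v : EuclideanSpace ℝ (Fin d), (ENNReal.ofReal ((2 * Real.pi * σ) ^ (-(d : ℝ) / 2) * Real.exp (-‖v‖ ^ 2 / (2 * σ)))).toReal • Complex.exp (⟪v, t⟫ * Complex.I)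
      = (((2 * Real.pi * σ) ^ (-(d : ℝ) / 2) : ℝ) : ℂ) * Complex.exp (-((1 / (2 * σ) : ℝ) : ℂ) * ‖v‖ ^ 2 + Complex.I * ⟪t, v⟫) := by
    intro v
    rw [ENNReal.toReal_ofReal (by positivity), Complex.real_smul, Complex.ofReal_mul, mul_assoc,
      Complex.ofReal_exp, ← Complex.exp_add, real_inner_comm]
    congr 2
    push_cast
    field_simp
  simp_rw [e]
  rw [integral_const_mul, h, ← mul_assoc, Complex.ofReal_cpow hp.le, ← Complex.cpow_add _ _ (by exact_mod_cast hp.ne')]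
  push_cast
  rw [show (-(d:ℂ) / 2 + d / 2) = 0 by ring, Complex.cpow_zero, one_mul, Complex.I_sq]
  congr 1
  field_simp
  norm_num

lemma gauss_conv (d : ℕ) {σ τ : ℝ} (hσ : 0 < σ) (hτ : 0 < τ) :
    Measure.conv (gaussMeasure d σ) (gaussMeasure d τ) = gaussMeasure d (σ + τ) := by
  have := isProb d hσ
  have := isProb d hτ
  have := isProb d (add_pos hσ hτ)
  apply Measure.ext_of_charFun
  ext t
  rw [charFun_conv, charFun_gauss d hσ, charFun_gauss d hτ, charFun_gauss d (add_pos hσ hτ),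
    ← Complex.exp_add]
  congr 1; push_cast; ring

lemma gauss_eq_map (d : ℕ) {σ : ℝ} (hσ : 0 < σ) :
    gaussMeasure d σ = (stdGaussian (EuclideanSpace ℝ (Fin d))).map (fun z => √σ • z) := by
  have := isProb d hσ
  have : IsProbabilityMeasure ((stdGaussian (EuclideanSpace ℝ (Fin d))).map (fun z => √σ • z)) :=
    Measure.isProbabilityMeasure_map (by fun_prop)
  apply Measure.ext_of_charFun
  ext t
  rw [charFun_gauss d hσ, charFun_map_smul, charFun_stdGaussian, norm_smul]
  congr 1
  rw [Real.norm_of_nonneg (Real.sqrt_nonneg _)]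
  push_cast
  rw [mul_pow, ← Complex.ofReal_pow √σ, Real.sq_sqrt hσ.le]; ring

lemma integrable_norm_pow (d : ℕ) {σ : ℝ} (hσ : 0 < σ) (k : ℕ) :
    Integrable (fun z => ‖z‖ ^ k) (gaussMeasure d σ) := by
  rw [gauss_eq_map d hσ, integrable_map_measure (by fun_prop) (by fun_prop)]
  have h := (IsGaussian.memLp_id (stdGaussian (EuclideanSpace ℝ (Fin d))) k (by simp)).integrable_norm_pow'
  have h2 := h.const_mul (√σ ^ k)
  refine h2.congr (ae_of_all _ fun z => ?_)
  simp [norm_smul, mul_pow, abs_of_nonneg (Real.sqrt_nonneg σ)]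

lemma moment (d : ℕ) {σ : ℝ} (hσ : 0 < σ) (k : ℕ) :
    ∫ z, ‖z‖ ^ k ∂gaussMeasure d σ =
      √σ ^ k * ∫ z, ‖z‖ ^ k ∂(stdGaussian (EuclideanSpace ℝ (Fin d))) := by
  rw [gauss_eq_map d hσ, integral_map (by fun_prop) (by fun_prop), ← integral_const_mul]
  simp [norm_smul, mul_pow, abs_of_nonneg (Real.sqrt_nonneg σ)]

lemma integral_inner_sq (d : ℕ) {σ : ℝ} (hσ : 0 < σ) (b : EuclideanSpace ℝ (Fin d)) :
    ∫ z, ⟪b, z⟫ ^ 2 ∂gaussMeasure d σ = σ * ‖b‖ ^ 2 := by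
  rw [gauss_eq_map d hσ, integral_map (by fun_prop) (by fun_prop)]
  have h := variance_dual_stdGaussian (InnerProductSpace.toDual ℝ _ b)
  rw [variance_of_integral_eq_zero (by fun_prop) (integral_strongDual_stdGaussian _)] at h
  simp only [InnerProductSpace.toDual_apply_apply, LinearIsometryEquiv.norm_map] at h
  rw [← h, ← integral_const_mul]
  simp [real_inner_smul_right, mul_pow, Real.sq_sqrt hσ.le]

section aux

lemma phi_lower {m c : ℝ} (hm : 0 < m) (hc : 0 < c) :
    c * Real.log c + (Real.log c + 1) * (m - c) ≤ m * Real.log m := by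
  have h := Real.log_le_sub_one_of_pos (div_pos hc hm)
  rw [Real.log_div hc.ne' hm.ne'] at h
  have h2 := mul_le_mul_of_nonneg_left h hm.le
  have : m * (c / m - 1) = c - m := by field_simp
  rw [this] at h2
  nlinarith

lemma phi_aux {t : ℝ} (ht : 0 < t) :
    t * Real.log t ≤ (t - 1) + (t - 1) ^ 2 / 2 + |t - 1| ^ 3 / 2 := by
  rcases le_total 1 t with h | h
  · have h0 : Real.log t ≤ Real.sinh (Real.log t) := Real.self_le_sinh_iff.2 (Real.log_nonneg h)
    rw [Real.sinh_eq, Real.exp_neg, Real.exp_log ht] at h0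
    have h1 := mul_le_mul_of_nonneg_left h0 ht.le
    have : t * ((t - t⁻¹) / 2) = (t ^ 2 - 1) / 2 := by field_simp
    rw [this] at h1
    have : 0 ≤ |t - 1| ^ 3 := by positivity
    nlinarith
  · have hx : 0 ≤ t⁻¹ - 1 := by
      have := (one_le_inv₀ ht).2 h
      linarith
    have h0 := Real.le_log_one_add_of_nonneg hx
    have e : 1 + (t⁻¹ - 1) = t⁻¹ := by ring
    rw [e, Real.log_inv] at h0
    have e2 : 2 * (t⁻¹ - 1) / (t⁻¹ - 1 + 2) = 2 * (1 - t) / (1 + t) := by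
      have : t⁻¹ - 1 + 2 = (1 + t) / t := by field_simp; ring
      rw [this]; field_simp
    rw [e2] at h0
    have h1 : Real.log t ≤ - (2 * (1 - t) / (1 + t)) := by linarith
    have h2 := mul_le_mul_of_nonneg_left h1 ht.le
    refine h2.trans ?_
    rw [abs_of_nonpos (by linarith)]
    have e3 : t * -(2 * (1 - t) / (1 + t)) = (t * (2 * (t - 1))) / (1 + t) := by
      field_simp; ring
    rw [e3, div_le_iff₀ (by linarith)]
    have : 0 ≤ (1 - t) ^ 3 * t := by
      have : 0 ≤ 1 - t := by linarith
      positivity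
    nlinarith

lemma phi_upper {u c : ℝ} (hu : 0 < u) (hc : 0 < c) :
    u * Real.log u ≤ c * Real.log c + (Real.log c + 1) * (u - c) + (u - c) ^ 2 / (2 * c)
      + |u - c| ^ 3 / (2 * c ^ 2) := by
  have h := mul_le_mul_of_nonneg_left (phi_aux (div_pos hu hc)) hc.le
  rw [Real.log_div hu.ne' hc.ne'] at h
  have e : u / c - 1 = (u - c) / c := by field_simp
  rw [e, abs_div, abs_of_pos hc] at h
  have e1 : c * (u / c * (Real.log u - Real.log c)) = u * Real.log u - u * Real.log c := by
    field_simp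
  have e2 : c * ((u - c) / c + ((u - c) / c) ^ 2 / 2 + (|u - c| / c) ^ 3 / 2) =
      (u - c) + (u - c) ^ 2 / (2 * c) + |u - c| ^ 3 / (2 * c ^ 2) := by
    field_simp
  rw [e1, e2] at h
  nlinarith

variable {E : Type*} [NormedAddCommGroup E] [InnerProductSpace ℝ E]

lemma tangent {p q : ℝ} (hp : 0 < p) (hq : 0 < q) (a b : E) :
    ‖b‖ ^ 2 / q + 2 / q * ⟪b, a - b⟫ - ‖b‖ ^ 2 / q ^ 2 * (p - q) ≤ ‖a‖ ^ 2 / p := by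
  have h : 0 ≤ p * ‖(1 / p) • a - (1 / q) • b‖ ^ 2 := by positivity
  rw [norm_sub_sq_real, norm_smul, norm_smul, real_inner_smul_left, real_inner_smul_right,
    mul_pow, mul_pow, Real.norm_eq_abs, Real.norm_eq_abs, sq_abs, sq_abs] at h
  rw [inner_sub_right, real_inner_self_eq_norm_sq, real_inner_comm]
  have e : p * ((1 / p) ^ 2 * ‖a‖ ^ 2 - 2 * (1 / p * (1 / q * ⟪a, b⟫)) + (1 / q) ^ 2 * ‖b‖ ^ 2)
     = ‖a‖ ^ 2 / p - (‖b‖ ^ 2 / q + 2 / q * (⟪a, b⟫ - ‖b‖ ^ 2) - ‖b‖ ^ 2 / q ^ 2 * (p - q)) := by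
    field_simp; ring
  linarith

structure Nice (ε M L K : ℝ) (f : E → ℝ) (g : E → E) : Prop where
  hε : 0 < ε
  hK : 0 ≤ K
  lb : ∀ x, ε ≤ f x
  ub : ∀ x, f x ≤ M
  gb : ∀ x, ‖g x‖ ≤ L
  lip : ∀ x y, |f y - f x| ≤ L * ‖y - x‖
  glip : ∀ x y, ‖g y - g x‖ ≤ K * ‖y - x‖
  tay : ∀ x y, |f y - f x - ⟪g x, y - x⟫| ≤ K * ‖y - x‖ ^ 2

namespace Nice
variable {ε M L K : ℝ} {f : E → ℝ} {g : E → E}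

lemma hL (h : Nice ε M L K f g) : 0 ≤ L := (norm_nonneg _).trans (h.gb 0)
lemma pos (h : Nice ε M L K f g) (x : E) : 0 < f x := h.hε.trans_le (h.lb x)

lemma cont (h : Nice ε M L K f g) : Continuous f :=
  (LipschitzWith.of_dist_le_mul (K := ⟨L, h.hL⟩) fun x y => by
    rw [Real.dist_eq, dist_eq_norm]; exact h.lip y x).continuous

lemma gcont (h : Nice ε M L K f g) : Continuous g :=
  (LipschitzWith.of_dist_le_mul (K := ⟨K, h.hK⟩) fun x y => by
    rw [dist_eq_norm, dist_eq_norm]; exact h.glip y x).continuous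

lemma phi_cont (h : Nice ε M L K f g) : Continuous fun x => f x * Real.log (f x) :=
  h.cont.mul (h.cont.log fun x => (h.pos x).ne')

lemma phi_bdd (h : Nice ε M L K f g) : ∃ B, ∀ x, ‖f x * Real.log (f x)‖ ≤ B := by
  obtain ⟨B, hB⟩ := (isCompact_Icc (a := ε) (b := M)).exists_bound_of_continuousOn
    (f := fun t : ℝ => t * Real.log t) Real.continuous_mul_log.continuousOn
  exact ⟨B, fun x => hB _ ⟨h.lb x, h.ub x⟩⟩

lemma I_cont (h : Nice ε M L K f g) : Continuous fun x => ‖g x‖ ^ 2 / f x :=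
  (h.gcont.norm.pow 2).div h.cont fun x => (h.pos x).ne'

lemma I_bdd (h : Nice ε M L K f g) (x : E) : ‖‖g x‖ ^ 2 / f x‖ ≤ L ^ 2 / ε := by
  have := h.pos x
  rw [Real.norm_of_nonneg (by positivity)]
  exact div_le_div₀ (sq_nonneg _) (pow_le_pow_left₀ (norm_nonneg _) (h.gb x) 2) h.hε (h.lb x)

lemma f_bdd (h : Nice ε M L K f g) (x : E) : ‖f x‖ ≤ M := by
  rw [Real.norm_of_nonneg (h.pos x).le]; exact h.ub x

end Nice

variable [MeasurableSpace E] [BorelSpace E] [FiniteDimensional ℝ E]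

lemma intg {F : Type*} [NormedAddCommGroup F]
    (μ : Measure E) [IsProbabilityMeasure μ] {φ : E → F} (hc : Continuous φ)
    {B : ℝ} (hB : ∀ x, ‖φ x‖ ≤ B) (x : E) : Integrable (fun z => φ (x + z)) μ := by
  have : SecondCountableTopology E := inferInstance
  refine Integrable.of_bound (C := B) (Continuous.aestronglyMeasurable (by fun_prop)) (ae_of_all _ fun z => hB _)

lemma Qcont {F : Type*} [NormedAddCommGroup F] [NormedSpace ℝ F]
    (μ : Measure E) [IsProbabilityMeasure μ] {φ : E → F} (hc : Continuous φ)
    {B : ℝ} (hB : ∀ x, ‖φ x‖ ≤ B) : Continuous (fun x => ∫ z, φ (x + z) ∂μ) := by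
  refine continuous_of_dominated (bound := fun _ => B)
    (fun x => (intg μ hc hB x).aestronglyMeasurable)
    (fun x => ae_of_all _ fun z => hB _) (integrable_const _) (ae_of_all _ fun z => by fun_prop)

lemma Qbdd {F : Type*} [NormedAddCommGroup F] [NormedSpace ℝ F]
    (μ : Measure E) [IsProbabilityMeasure μ] {φ : E → F}
    {B : ℝ} (hB : ∀ x, ‖φ x‖ ≤ B) (x : E) : ‖∫ z, φ (x + z) ∂μ‖ ≤ B := by
  simpa using norm_integral_le_of_norm_le_const (μ := μ) (ae_of_all _ fun z => hB (x + z))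

lemma Nice.Q (μ : Measure E) [IsProbabilityMeasure μ] {ε M L K : ℝ} {f : E → ℝ} {g : E → E}
    (h : Nice ε M L K f g) :
    Nice ε M L K (fun x => ∫ z, f (x + z) ∂μ) (fun x => ∫ z, g (x + z) ∂μ) := by
  have hf := intg μ h.cont h.f_bdd
  have hg := intg μ h.gcont h.gb
  refine ⟨h.hε, h.hK, fun x => ?_, fun x => ?_, Qbdd μ h.gb, fun x y => ?_, fun x y => ?_,
    fun x y => ?_⟩
  · have := integral_mono (μ := μ) (integrable_const ε) (hf x) fun z => h.lb (x + z)
    simpa using this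
  · have := integral_mono (μ := μ) (hf x) (integrable_const M) fun z => h.ub (x + z)
    simpa using this
  · rw [← integral_sub (hf y) (hf x), ← Real.norm_eq_abs]
    have := norm_integral_le_of_norm_le_const (μ := μ) (f := fun z => f (y + z) - f (x + z))
      (C := L * ‖y - x‖)
      (ae_of_all _ fun z => by simpa using h.lip (x + z) (y + z))
    simpa using this
  · rw [← integral_sub (hg y) (hg x)]
    have := norm_integral_le_of_norm_le_const (μ := μ) (f := fun z => g (y + z) - g (x + z))
      (C := K * ‖y - x‖)
      (ae_of_all _ fun z => by simpa using h.glip (x + z) (y + z))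
    simpa using this
  · have e : ⟪∫ z, g (x + z) ∂μ, y - x⟫ = ∫ z, ⟪g (x + z), y - x⟫ ∂μ := by
      rw [real_inner_comm, ← integral_inner (hg x)]
      simp_rw [real_inner_comm]
    have hi : Integrable (fun z => ⟪g (x + z), y - x⟫) μ := (hg x).inner_const _
    have hfs : Integrable (fun z => f (y + z) - f (x + z)) μ := (hf y).sub (hf x)
    rw [e, ← integral_sub (hf y) (hf x), ← integral_sub hfs hi, ← Real.norm_eq_abs]
    have := norm_integral_le_of_norm_le_const (μ := μ)
      (f := fun z => f (y + z) - f (x + z) - ⟪g (x + z), y - x⟫)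
      (C := K * ‖y - x‖ ^ 2)
      (ae_of_all _ fun z => by simpa using h.tay (x + z) (y + z))
    simpa using this

/-- Jensen for `|a|²/p`. -/
lemma Nice.jensen (μ : Measure E) [IsProbabilityMeasure μ] {ε M L K : ℝ} {f : E → ℝ} {g : E → E}
    (h : Nice ε M L K f g) (x : E) :
    ‖∫ z, g (x + z) ∂μ‖ ^ 2 / (∫ z, f (x + z) ∂μ) ≤ ∫ z, ‖g (x + z)‖ ^ 2 / f (x + z) ∂μ := by
  have hf := intg μ h.cont h.f_bdd x
  have hg := intg μ h.gcont h.gb x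
  have hI := intg μ h.I_cont h.I_bdd x
  set b := ∫ z, g (x + z) ∂μ with hb
  set q := ∫ z, f (x + z) ∂μ with hq
  have hqp : 0 < q := (h.Q μ).pos x
  have hgi : Integrable (fun z => ⟪b, g (x + z) - b⟫) μ := (hg.sub (integrable_const b)).const_inner b
  have hfi : Integrable (fun z => f (x + z) - q) μ := hf.sub (integrable_const q)
  have key := integral_mono (μ := μ)
    (((integrable_const (‖b‖ ^ 2 / q)).add (hgi.const_mul (2 / q))).sub
      (hfi.const_mul (‖b‖ ^ 2 / q ^ 2))) hI
    fun z => tangent (h.pos (x + z)) hqp (g (x + z)) b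
  have e1 : ∫ z, ⟪b, g (x + z) - b⟫ ∂μ = 0 := by
    have hgs : Integrable (fun z => g (x + z) - b) μ := hg.sub (integrable_const b)
    rw [integral_inner hgs, integral_sub hg (integrable_const b)]
    simp [← hb]
  have e2 : ∫ z, (f (x + z) - q) ∂μ = 0 := by
    rw [integral_sub hf (integrable_const q)]
    simp [← hq]
  rw [integral_sub', integral_add'] at key
  · rw [integral_const_mul, integral_const_mul, e1, e2] at key
    simpa using key
  · exact integrable_const _
  · exact hgi.const_mul _
  · exact (integrable_const _).add (hgi.const_mul _)
  · exact hfi.const_mul _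

end aux

section main

variable {d : ℕ}

local notation "𝔼" d => EuclideanSpace ℝ (Fin d)

lemma local_step {h : ℝ} (hh : 0 < h) {ε M L K : ℝ} {f : (𝔼 d) → ℝ} {g : (𝔼 d) → (𝔼 d)}
    (hN : Nice ε M L K f g) (x : 𝔼 d) :
    ∫ z, f (x + z) * Real.log (f (x + z)) ∂gaussMeasure d h
      ≤ (∫ z, f (x + z) ∂gaussMeasure d h) * Real.log (∫ z, f (x + z) ∂gaussMeasure d h)
        + h / 2 * ∫ z, ‖g (x + z)‖ ^ 2 / f (x + z) ∂gaussMeasure d h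
        + (h / 2 * (2 * L * K / ε + L ^ 3 / ε ^ 2) * (∫ z, ‖z‖ ^ 1 ∂gaussMeasure d h)
          + (L * K / ε + L ^ 3 / (2 * ε ^ 2)) * (∫ z, ‖z‖ ^ 3 ∂gaussMeasure d h)) := by
  have := isProb d hh
  set μ := gaussMeasure d h with hμ
  obtain ⟨B, hB⟩ := hN.phi_bdd
  have hf := intg μ hN.cont hN.f_bdd x
  have hI := intg μ hN.I_cont hN.I_bdd x
  have hΦ := intg μ hN.phi_cont hB x
  have h1 : Integrable (fun z => ‖z‖ ^ 1) μ := integrable_norm_pow d hh 1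
  have h2 : Integrable (fun z => ‖z‖ ^ 2) μ := integrable_norm_pow d hh 2
  have h3 : Integrable (fun z => ‖z‖ ^ 3) μ := integrable_norm_pow d hh 3
  have hL := hN.hL
  have hK := hN.hK
  have hε := hN.hε
  set c := f x with hc
  set b := g x with hb
  have hcε : ε ≤ c := hN.lb x
  have hcp : 0 < c := hN.pos x
  have hin : Integrable (fun z => ⟪b, z⟫ ^ 2) μ := by
    refine (h2.const_mul (‖b‖ ^ 2)).mono' (by fun_prop) (ae_of_all _ fun z => ?_)
    rw [Real.norm_of_nonneg (sq_nonneg _), ← mul_pow, ← sq_abs]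
    exact pow_le_pow_left₀ (abs_nonneg _) (abs_real_inner_le_norm b z) 2
  -- first step
  have p1 : ∀ z, f (x + z) * Real.log (f (x + z)) ≤
      c * Real.log c + (Real.log c + 1) * (f (x + z) - c) + 1 / (2 * c) * ⟪b, z⟫ ^ 2
        + (L * K / ε + L ^ 3 / (2 * ε ^ 2)) * ‖z‖ ^ 3 := by
    intro z
    have hz := phi_upper (hN.pos (x + z)) hcp
    have hl := hN.lip x (x + z)
    have ht := hN.tay x (x + z)
    rw [add_sub_cancel_left] at hl ht
    rw [← hc] at hl ht
    rw [← hb] at ht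
    have hi : |⟪b, z⟫| ≤ L * ‖z‖ :=
      (abs_real_inner_le_norm b z).trans (by gcongr; exact hN.gb x)
    set u := f (x + z) - c with hu
    have q1 : u ^ 2 ≤ ⟪b, z⟫ ^ 2 + 2 * L * K * ‖z‖ ^ 3 := by
      have e : u ^ 2 - ⟪b, z⟫ ^ 2 = (u - ⟪b, z⟫) * (u + ⟪b, z⟫) := by ring
      have e2 : (u - ⟪b, z⟫) * (u + ⟪b, z⟫) ≤ (K * ‖z‖ ^ 2) * (L * ‖z‖ + L * ‖z‖) := by
        refine (le_abs_self _).trans ?_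
        rw [abs_mul]
        gcongr
        exact (abs_add_le _ _).trans (add_le_add hl hi)
      nlinarith
    have q2 : |u| ^ 3 ≤ L ^ 3 * ‖z‖ ^ 3 := by
      rw [← mul_pow]; exact pow_le_pow_left₀ (abs_nonneg _) hl 3
    have q3 : u ^ 2 / (2 * c) ≤ 1 / (2 * c) * ⟪b, z⟫ ^ 2 + L * K / ε * ‖z‖ ^ 3 := by
      calc u ^ 2 / (2 * c) ≤ (⟪b, z⟫ ^ 2 + 2 * L * K * ‖z‖ ^ 3) / (2 * c) := by gcongr
        _ = 1 / (2 * c) * ⟪b, z⟫ ^ 2 + L * K / c * ‖z‖ ^ 3 := by field_simp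
        _ ≤ _ := by gcongr
    have q4 : |u| ^ 3 / (2 * c ^ 2) ≤ L ^ 3 / (2 * ε ^ 2) * ‖z‖ ^ 3 := by
      calc |u| ^ 3 / (2 * c ^ 2) ≤ (L ^ 3 * ‖z‖ ^ 3) / (2 * ε ^ 2) := by gcongr
        _ = _ := by ring
    linarith
  have hfc : Integrable (fun z => f (x + z) - c) μ := hf.sub (integrable_const c)
  have i1 : Integrable (fun z => c * Real.log c + (Real.log c + 1) * (f (x + z) - c)) μ :=
    (integrable_const _).add (hfc.const_mul _)
  have i2 : Integrable (fun z => c * Real.log c + (Real.log c + 1) * (f (x + z) - c)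
      + 1 / (2 * c) * ⟪b, z⟫ ^ 2) μ := i1.add (hin.const_mul _)
  have k1 := integral_mono hΦ (i2.add (h3.const_mul (L * K / ε + L ^ 3 / (2 * ε ^ 2)))) p1
  rw [integral_add' i2 (h3.const_mul _), integral_add i1 (hin.const_mul _),
    integral_add (integrable_const _) (hfc.const_mul _), integral_const_mul, integral_const_mul,
    integral_const_mul, integral_sub hf (integrable_const c), integral_inner_sq d hh] at k1
  simp only [integral_const, probReal_univ, one_smul] at k1
  have k2 := phi_lower ((hN.Q μ).pos x) hcp
  -- second step
  have p2 : ∀ z, ‖b‖ ^ 2 / c ≤ ‖g (x + z)‖ ^ 2 / f (x + z)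
      + (2 * L * K / ε + L ^ 3 / ε ^ 2) * ‖z‖ ^ 1 := by
    intro z
    have ht := tangent (hN.pos (x + z)) hcp (g (x + z)) b
    have hl := hN.lip x (x + z)
    have hg := hN.glip x (x + z)
    rw [add_sub_cancel_left] at hl hg
    rw [← hc] at hl
    rw [← hb] at hg
    have hbL : ‖b‖ ≤ L := hN.gb x
    have a1 : -(2 / c * ⟪b, g (x + z) - b⟫) ≤ 2 / ε * (L * (K * ‖z‖)) := by
      rw [← mul_neg]
      have : -⟪b, g (x + z) - b⟫ ≤ L * (K * ‖z‖) := by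
        refine (neg_le_abs _).trans ((abs_real_inner_le_norm _ _).trans ?_)
        gcongr
      calc 2 / c * -⟪b, g (x + z) - b⟫ ≤ 2 / c * (L * (K * ‖z‖)) := by gcongr
        _ ≤ _ := by gcongr
    have a2 : ‖b‖ ^ 2 / c ^ 2 * (f (x + z) - c) ≤ L ^ 2 / ε ^ 2 * (L * ‖z‖) := by
      calc _ ≤ ‖b‖ ^ 2 / c ^ 2 * (L * ‖z‖) := by
            gcongr; exact (le_abs_self _).trans hl
        _ ≤ _ := by gcongr
    have e : (2 * L * K / ε + L ^ 3 / ε ^ 2) * ‖z‖ ^ 1 =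
      2 / ε * (L * (K * ‖z‖)) + L ^ 2 / ε ^ 2 * (L * ‖z‖) := by ring
    linarith
  have k3 := integral_mono (integrable_const _) (hI.add (h1.const_mul (2 * L * K / ε + L ^ 3 / ε ^ 2))) p2
  rw [integral_add' hI (h1.const_mul _), integral_const_mul] at k3
  simp only [integral_const, probReal_univ, one_smul] at k3
  have k4 := mul_le_mul_of_nonneg_left k3 (show 0 ≤ h / 2 by positivity)
  have e5 : 1 / (2 * c) * (h * ‖b‖ ^ 2) = h / 2 * (‖b‖ ^ 2 / c) := by field_simp
  rw [e5, integral_const_mul] at k1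
  linarith

def Claim (d : ℕ) (ε M L K h e : ℝ) : Prop :=
  ∀ (f : (𝔼 d) → ℝ) (g : (𝔼 d) → (𝔼 d)), Nice ε M L K f g → ∀ x : 𝔼 d,
    ∫ z, f (x + z) * Real.log (f (x + z)) ∂gaussMeasure d h
      ≤ (∫ z, f (x + z) ∂gaussMeasure d h) * Real.log (∫ z, f (x + z) ∂gaussMeasure d h)
        + h / 2 * ∫ z, ‖g (x + z)‖ ^ 2 / f (x + z) ∂gaussMeasure d h + e

lemma claim_local (d : ℕ) (ε M L K : ℝ) :
    ∃ C, ∀ h, 0 < h → Claim d ε M L K h (C * (h * √h)) := by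
  refine ⟨1 / 2 * (2 * L * K / ε + L ^ 3 / ε ^ 2) * (∫ z, ‖z‖ ^ 1 ∂(stdGaussian (𝔼 d)))
    + (L * K / ε + L ^ 3 / (2 * ε ^ 2)) * (∫ z, ‖z‖ ^ 3 ∂(stdGaussian (𝔼 d))), ?_⟩
  intro h hh f g hN x
  have := local_step hh hN x
  rw [moment d hh, moment d hh] at this
  have e : √h ^ 3 = h * √h := by
    rw [pow_succ, Real.sq_sqrt hh.le]
  rw [e] at this
  refine this.trans (le_of_eq ?_)
  ring

lemma conv_int {h : ℝ} (hh : 0 < h) {φ : (𝔼 d) → ℝ} (hc : Continuous φ)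
    {B : ℝ} (hB : ∀ x, ‖φ x‖ ≤ B) (x : 𝔼 d) :
    ∫ w, φ (x + w) ∂gaussMeasure d (2 * h) =
      ∫ z, (∫ z', φ (x + z + z') ∂gaussMeasure d h) ∂gaussMeasure d h := by
  have := isProb d hh
  have := isProb d (add_pos hh hh)
  rw [two_mul, ← gauss_conv d hh hh, integral_conv]
  · simp_rw [add_assoc]
  · rw [gauss_conv d hh hh]; exact intg _ hc hB x

lemma claim_double {ε M L K h e : ℝ} (hh : 0 < h) (H : Claim d ε M L K h e) :
    Claim d ε M L K (2 * h) (2 * e) := by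
  intro f g hN x
  have := isProb d hh
  obtain ⟨B, hB⟩ := hN.phi_bdd
  rw [conv_int hh hN.cont hN.f_bdd, conv_int hh hN.phi_cont hB, conv_int hh hN.I_cont hN.I_bdd]
  set μ := gaussMeasure d h with hμ
  have hQ := hN.Q μ
  obtain ⟨B', hB'⟩ := hQ.phi_bdd
  have j1 := intg μ (Qcont μ hN.phi_cont hB) (Qbdd μ hB) x
  have j2 := intg μ hQ.phi_cont hB' x
  have j3 := intg μ (Qcont μ hN.I_cont hN.I_bdd) (Qbdd μ hN.I_bdd) x
  have j4 := intg μ hQ.I_cont hQ.I_bdd x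
  have j5 := j2.add (j3.const_mul (h / 2))
  have k1 := integral_mono j1 (j5.add (integrable_const e)) fun z => H f g hN (x + z)
  rw [integral_add' j5 (integrable_const e), integral_add' j2 (j3.const_mul _),
    integral_const_mul] at k1
  simp only [integral_const, probReal_univ, one_smul] at k1
  have k2 := H _ _ hQ x
  have k3 := integral_mono j4 j3 fun z => hN.jensen μ (x + z)
  have k4 := mul_le_mul_of_nonneg_left k3 (show 0 ≤ h / 2 by positivity)
  linarith

lemma claim_pow {ε M L K : ℝ} (n : ℕ) : ∀ {h e : ℝ}, 0 < h → Claim d ε M L K h e →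
    Claim d ε M L K (2 ^ n * h) (2 ^ n * e) := by
  induction n with
  | zero => intro h e hh H; simpa using H
  | succ n ih =>
    intro h e hh H
    have := claim_double (by positivity) (ih hh H)
    rw [pow_succ']
    simpa [mul_assoc] using this

lemma lsi_nice {σ : ℝ} (hσ : 0 < σ) {ε M L K : ℝ} {f : (𝔼 d) → ℝ} {g : (𝔼 d) → (𝔼 d)}
    (hN : Nice ε M L K f g) :
    ∫ z, f z * Real.log (f z) ∂gaussMeasure d σ
      ≤ (∫ z, f z ∂gaussMeasure d σ) * Real.log (∫ z, f z ∂gaussMeasure d σ)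
        + σ / 2 * ∫ z, ‖g z‖ ^ 2 / f z ∂gaussMeasure d σ := by
  obtain ⟨C, hC⟩ := claim_local d ε M L K
  have key : ∀ n : ℕ, ∫ z, f z * Real.log (f z) ∂gaussMeasure d σ
      ≤ (∫ z, f z ∂gaussMeasure d σ) * Real.log (∫ z, f z ∂gaussMeasure d σ)
        + σ / 2 * ∫ z, ‖g z‖ ^ 2 / f z ∂gaussMeasure d σ + C * σ * √(σ * (1 / 2) ^ n) := by
    intro n
    have hp : 0 < σ * (1 / 2) ^ n := by positivity
    have := claim_pow n hp (hC _ hp) f g hN 0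
    have e : 2 ^ n * (σ * (1 / 2) ^ n) = σ := by
      rw [mul_left_comm, ← mul_pow]; norm_num
    have e2 : 2 ^ n * (C * ((σ * (1 / 2) ^ n) * √(σ * (1 / 2) ^ n))) =
        C * (2 ^ n * (σ * (1 / 2) ^ n)) * √(σ * (1 / 2) ^ n) := by ring
    rw [e2, e] at this
    simpa using this
  have hlim : Tendsto (fun n : ℕ => (∫ z, f z ∂gaussMeasure d σ) * Real.log (∫ z, f z ∂gaussMeasure d σ)
        + σ / 2 * ∫ z, ‖g z‖ ^ 2 / f z ∂gaussMeasure d σ + C * σ * √(σ * (1 / 2) ^ n)) atTop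
      (𝓝 ((∫ z, f z ∂gaussMeasure d σ) * Real.log (∫ z, f z ∂gaussMeasure d σ)
        + σ / 2 * ∫ z, ‖g z‖ ^ 2 / f z ∂gaussMeasure d σ + C * σ * √(σ * 0))) := by
    refine tendsto_const_nhds.add (Tendsto.const_mul _ ?_)
    refine (Real.continuous_sqrt.tendsto _).comp (Tendsto.const_mul _ ?_)
    exact tendsto_pow_atTop_nhds_zero_of_lt_one (by norm_num) (by norm_num)
  have := ge_of_tendsto' hlim key
  simpa using this

lemma norm_gradient (F : (𝔼 d) → ℝ) (x : 𝔼 d) : ‖gradient F x‖ = ‖fderiv ℝ F x‖ := by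
  rw [gradient, LinearIsometryEquiv.norm_map]

lemma nice_of_smooth {φ : (𝔼 d) → ℝ} (hφ : ContDiff ℝ (⊤ : ℕ∞) φ) (hs : HasCompactSupport φ)
    (h0 : ∀ x, 0 ≤ φ x) {ε : ℝ} (hε : 0 < ε) :
    ∃ M L K, Nice ε M L K (fun x => φ x + ε) (gradient (fun x => φ x + ε)) := by
  obtain ⟨M, hM⟩ := hs.exists_bound_of_continuous hφ.continuous
  have hφ' : ContDiff ℝ (⊤ : ℕ∞) (fderiv ℝ φ) := hφ.fderiv_right (by simp)
  obtain ⟨L, hL⟩ := (hs.fderiv ℝ).exists_bound_of_continuous hφ'.continuous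
  obtain ⟨K, hK⟩ := hφ'.lipschitzWith_of_hasCompactSupport (hs.fderiv ℝ) (by simp)
  have hd : ∀ x, DifferentiableAt ℝ φ x := hφ.differentiable (by simp)
  have hfd : ∀ x, fderiv ℝ (fun x => φ x + ε) x = fderiv ℝ φ x := fun x => by
    rw [fderiv_add_const]
  refine ⟨M + ε, L, K, hε, K.2, fun x => by linarith [h0 x], fun x => ?_, fun x => ?_, fun x y => ?_,
    fun x y => ?_, fun x y => ?_⟩
  · have := (le_abs_self _).trans (hM x); linarith
  · rw [norm_gradient, hfd]; exact hL x
  · have := convex_univ.norm_image_sub_le_of_norm_fderiv_le (𝕜 := ℝ) (fun x _ => hd x)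
      (fun x _ => hL x) (Set.mem_univ x) (Set.mem_univ y)
    simpa using this
  · rw [gradient, gradient, ← map_sub, LinearIsometryEquiv.norm_map, hfd, hfd, ← dist_eq_norm,
      ← dist_eq_norm]
    exact hK.dist_le_mul y x
  · have := (convex_segment x y).norm_image_sub_le_of_norm_fderiv_le' (𝕜 := ℝ) (f := φ)
      (φ := fderiv ℝ φ x) (C := K * ‖y - x‖) (fun x _ => hd x) (fun z hz => ?_)
      (left_mem_segment ℝ x y) (right_mem_segment ℝ x y)
    · rw [gradient, InnerProductSpace.toDual_symm_apply, hfd, add_sub_add_right_eq_sub]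
      rw [Real.norm_eq_abs] at this
      refine this.trans (le_of_eq (by ring))
    · rw [← dist_eq_norm]
      refine (hK.dist_le_mul z x).trans ?_
      gcongr
      rw [dist_eq_norm]
      exact norm_sub_le_of_mem_segment hz

lemma exists_cutoff (d : ℕ) : ∃ (C : ℝ) (χ : ℕ → (𝔼 d) → ℝ), 0 ≤ C ∧
    (∀ n, ContDiff ℝ (⊤ : ℕ∞) (χ n)) ∧ (∀ n, HasCompactSupport (χ n)) ∧
    (∀ n x, 0 ≤ χ n x) ∧ (∀ n x, χ n x ≤ 1) ∧ (∀ n x, ‖fderiv ℝ (χ n) x‖ ≤ C) ∧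
    (∀ x, ∀ᶠ n in atTop, ∀ᶠ y in 𝓝 x, χ n y = 1) := by
  let b : ContDiffBump (0 : 𝔼 d) := ⟨1, 2, one_pos, one_lt_two⟩
  have hb : ContDiff ℝ (⊤ : ℕ∞) b := b.contDiff
  have hbs : HasCompactSupport b := b.hasCompactSupport
  obtain ⟨C, hC⟩ := (hbs.fderiv ℝ).exists_bound_of_continuous (hb.continuous_fderiv (by simp))
  have hr : ∀ n : ℕ, 0 < ((n : ℝ) + 1)⁻¹ := fun n => by positivity
  have hr1 : ∀ n : ℕ, ((n : ℝ) + 1)⁻¹ ≤ 1 := fun n => by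
    apply inv_le_one_of_one_le₀; linarith [(Nat.cast_nonneg n : (0 : ℝ) ≤ n)]
  have hC0 : 0 ≤ C := (norm_nonneg _).trans (hC 0)
  refine ⟨C, fun n x => b (((n : ℝ) + 1)⁻¹ • x), hC0, fun n => ?_, fun n => ?_,
    fun n x => b.nonneg, fun n x => b.le_one, fun n x => ?_, fun x => ?_⟩
  · exact hb.comp (contDiff_const_smul _)
  · exact hbs.comp_smul (hr n).ne'
  · have hd : DifferentiableAt ℝ b (((n : ℝ) + 1)⁻¹ • x) := hb.differentiable (by simp) _
    have h1 : HasFDerivAt (fun y : 𝔼 d => ((n : ℝ) + 1)⁻¹ • y)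
        (((n : ℝ) + 1)⁻¹ • ContinuousLinearMap.id ℝ (𝔼 d)) x :=
      (((n : ℝ) + 1)⁻¹ • ContinuousLinearMap.id ℝ (𝔼 d)).hasFDerivAt
    have h2 := hd.hasFDerivAt.comp x h1
    have h3 : fderiv ℝ (fun x => b (((n : ℝ) + 1)⁻¹ • x)) x = _ := h2.fderiv
    rw [h3, ContinuousLinearMap.comp_smul, ContinuousLinearMap.comp_id, norm_smul,
      Real.norm_of_nonneg (hr n).le]
    calc _ ≤ 1 * C := by
          gcongr
          · exact hr1 n
          · exact hC _
      _ = C := one_mul C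
  · obtain ⟨N, hN⟩ := exists_nat_gt ‖x‖
    filter_upwards [eventually_ge_atTop N] with n hn
    have hlt : ‖x‖ < (n : ℝ) + 1 := by
      have : (N : ℝ) ≤ n := by exact_mod_cast hn
      linarith
    have : ∀ᶠ y in 𝓝 x, ‖y‖ < (n : ℝ) + 1 := continuous_norm.continuousAt.eventually (gt_mem_nhds hlt)
    filter_upwards [this] with y hy
    apply b.one_of_mem_closedBall
    rw [mem_closedBall_zero_iff, norm_smul, Real.norm_of_nonneg (hr n).le]
    change _ ≤ (1 : ℝ)
    rw [inv_mul_le_iff₀ (by positivity)]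
    linarith

lemma tlogt_bound {t s : ℝ} (ht : 0 < t) (hs : 0 < s) (h : t ≤ s + 1) :
    ‖t * Real.log t‖ ≤ 2 * ‖s * Real.log s‖ + 3 := by
  rw [Real.norm_eq_abs, Real.norm_eq_abs]
  have h0 : 0 ≤ |s * Real.log s| := abs_nonneg _
  rcases le_total t 1 with h1 | h1
  · have := Real.abs_log_mul_self_lt t ht h1
    rw [mul_comm] at this
    linarith
  · have hl : 0 ≤ Real.log t := Real.log_nonneg h1
    rw [abs_of_nonneg (by positivity)]
    have hlog : Real.log t ≤ Real.log (s + 1) := Real.log_le_log ht h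
    have e : t * Real.log t ≤ (s + 1) * Real.log (s + 1) := by gcongr
    refine e.trans ?_
    rcases le_total s 1 with h2 | h2
    · have a1 : Real.log (s + 1) ≤ s := by
        have := Real.log_le_sub_one_of_pos (show 0 < s + 1 by linarith); linarith
      have : (s + 1) * Real.log (s + 1) ≤ 2 * 1 := by
        have : 0 ≤ Real.log (s + 1) := Real.log_nonneg (by linarith)
        gcongr <;> linarith
      linarith
    · have a2 : Real.log (s + 1) ≤ Real.log s + 1 / s := by
        have e3 : s + 1 = s * (1 + 1 / s) := by field_simp
        rw [e3, Real.log_mul hs.ne' (by positivity)]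
        have := Real.log_le_sub_one_of_pos (show 0 < 1 + 1 / s by positivity)
        linarith
      have hls : 0 ≤ Real.log s := Real.log_nonneg h2
      rw [abs_of_nonneg (by positivity)]
      calc (s + 1) * Real.log (s + 1) ≤ (s + 1) * (Real.log s + 1 / s) := by gcongr
        _ = s * Real.log s + Real.log s + 1 + 1 / s := by field_simp; ring
        _ ≤ s * Real.log s + s * Real.log s + 1 + 1 := by
            gcongr
            · nlinarith
            · rw [div_le_one hs]; exact h2
        _ ≤ _ := by linarith

lemma fisher_bound {χ f a F F' C e : ℝ} (h0 : 0 ≤ χ) (h1 : χ ≤ 1) (hf : 0 < f) (ha : 0 ≤ a)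
    (hC : 0 ≤ C) (he : 0 < e) (hF : F = χ ^ 2 * f + e) (h0F' : 0 ≤ F')
    (hF' : F' ≤ χ ^ 2 * a + f * (2 * χ * C)) :
    F' ^ 2 / F ≤ 2 * (a ^ 2 / f) + 8 * C ^ 2 * f := by
  have hFp : 0 < F := by rw [hF]; positivity
  have b1 : F' ≤ χ * (a + 2 * f * C) := by
    have : χ ^ 2 * a ≤ χ * a := by
      gcongr; nlinarith
    nlinarith
  have b2 : F' ^ 2 ≤ χ ^ 2 * (a + 2 * f * C) ^ 2 := by
    rw [← mul_pow]; exact pow_le_pow_left₀ h0F' b1 2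
  rw [div_le_iff₀ hFp]
  refine b2.trans ?_
  have b3 : (a + 2 * f * C) ^ 2 ≤ (2 * (a ^ 2 / f) + 8 * C ^ 2 * f) * f := by
    have : (2 * (a ^ 2 / f) + 8 * C ^ 2 * f) * f = 2 * a ^ 2 + 8 * C ^ 2 * f ^ 2 := by field_simp
    rw [this]; nlinarith [sq_nonneg (a - 2 * f * C)]
  calc χ ^ 2 * (a + 2 * f * C) ^ 2 ≤ χ ^ 2 * ((2 * (a ^ 2 / f) + 8 * C ^ 2 * f) * f) := by gcongr
    _ = (2 * (a ^ 2 / f) + 8 * C ^ 2 * f) * (χ ^ 2 * f) := by ring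
    _ ≤ _ := by gcongr; linarith

set_option maxHeartbeats 1000000 in
lemma lsi {σ : ℝ} (hσ : 0 < σ)
    (f : (𝔼 d) → ℝ) (hf : ContDiff ℝ (⊤ : ℕ∞) f)
    (hfpos : ∀ y, 0 < f y)
    (hint1 : Integrable f (gaussMeasure d σ))
    (hint2 : Integrable (fun y => f y * Real.log (f y)) (gaussMeasure d σ))
    (hint3 : Integrable (fun y => ‖gradient f y‖ ^ 2 / f y) (gaussMeasure d σ)) :
    (∫ y, f y * Real.log (f y) ∂gaussMeasure d σ)
      ≤ (∫ y, f y ∂gaussMeasure d σ) * Real.log (∫ y, f y ∂gaussMeasure d σ)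
      + σ / 2 * ∫ y, ‖gradient f y‖ ^ 2 / f y ∂gaussMeasure d σ := by
  have := isProb d hσ
  obtain ⟨C, χ, hC, hχc, hχs, hχ0, hχ1, hχd, hχe⟩ := exists_cutoff d
  let e : ℕ → ℝ := fun n => 1 / ((n : ℝ) + 1)
  have he : ∀ n, 0 < e n := fun n => by positivity
  have he1 : ∀ n, e n ≤ 1 := fun n => by
    rw [div_le_one (by positivity)]; linarith [(Nat.cast_nonneg n : (0 : ℝ) ≤ n)]
  have helim : Tendsto e atTop (𝓝 0) := tendsto_one_div_add_atTop_nhds_zero_nat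
  let F : ℕ → (𝔼 d) → ℝ := fun n x => χ n x ^ 2 * f x + e n
  have hFc : ∀ n, ContDiff ℝ (⊤ : ℕ∞) (F n) := fun n => (((hχc n).pow 2).mul hf).add contDiff_const
  have hFpos : ∀ n x, 0 < F n x := fun n x => by
    have := he n; have := hfpos x; positivity
  have hFle : ∀ n x, F n x ≤ f x + 1 := fun n x => by
    have h1 : χ n x ^ 2 ≤ 1 := pow_le_one₀ (hχ0 n x) (hχ1 n x)
    have h2 : χ n x ^ 2 * f x ≤ 1 * f x := by gcongr; exact (hfpos x).le
    have := he1 n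
    simp only [F]; linarith
  have hev : ∀ x, ∀ᶠ n in atTop, F n =ᶠ[𝓝 x] fun y => f y + e n := fun x => by
    filter_upwards [hχe x] with n hn
    filter_upwards [hn] with y hy
    simp [F, hy]
  have hFlim : ∀ x, Tendsto (fun n => F n x) atTop (𝓝 (f x)) := fun x => by
    have h1 : Tendsto (fun n => f x + e n) atTop (𝓝 (f x + 0)) := tendsto_const_nhds.add helim
    rw [add_zero] at h1
    refine h1.congr' ?_
    filter_upwards [hev x] with n hn using hn.self_of_nhds.symm
  have hGe : ∀ x, ∀ᶠ n in atTop, gradient (F n) x = gradient f x := fun x => by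
    filter_upwards [hev x] with n hn
    rw [gradient, gradient, hn.fderiv_eq, fderiv_add_const]
  have hGb : ∀ n x, ‖gradient (F n) x‖ ^ 2 / F n x ≤
      2 * (‖gradient f x‖ ^ 2 / f x) + 8 * C ^ 2 * f x := fun n x => by
    refine fisher_bound (χ := χ n x) (e := e n) (hχ0 n x) (hχ1 n x) (hfpos x) (norm_nonneg _) hC (he n) rfl
      (norm_nonneg _) ?_
    rw [norm_gradient, norm_gradient]
    have d1 : HasFDerivAt (χ n) (fderiv ℝ (χ n) x) x :=
      ((hχc n).differentiable (by simp) x).hasFDerivAt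
    have d2 : HasFDerivAt f (fderiv ℝ f x) x := (hf.differentiable (by simp) x).hasFDerivAt
    have d3 := ((d1.pow 2).mul d2).add_const (e n)
    have d4 : fderiv ℝ (F n) x = _ := d3.fderiv
    rw [d4]
    refine (norm_add_le _ _).trans ?_
    rw [norm_smul, norm_smul, norm_smul]
    have z0 := hχ0 n x
    have z1 := hfpos x
    simp only [Nat.add_one_sub_one, pow_one, nsmul_eq_mul, Nat.cast_ofNat]
    rw [Real.norm_of_nonneg (by positivity), Real.norm_of_nonneg z1.le, Real.norm_of_nonneg (by positivity)]
    gcongr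
    exact hχd n x
  have key : ∀ n, (∫ y, F n y * Real.log (F n y) ∂gaussMeasure d σ)
      ≤ (∫ y, F n y ∂gaussMeasure d σ) * Real.log (∫ y, F n y ∂gaussMeasure d σ)
      + σ / 2 * ∫ y, ‖gradient (F n) y‖ ^ 2 / F n y ∂gaussMeasure d σ := fun n => by
    have hcs : HasCompactSupport (fun x => χ n x ^ 2 * f x) := by
      have : HasCompactSupport (fun x => χ n x * (χ n x * f x)) := (hχs n).mul_right
      simpa only [sq, mul_assoc] using this
    obtain ⟨M, L, K, hN⟩ := nice_of_smooth (((hχc n).pow 2).mul hf) hcs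
      (fun x => mul_nonneg (sq_nonneg _) (hfpos x).le) (he n)
    exact lsi_nice hσ hN
  have hgc : ∀ n, Continuous (gradient (F n)) := fun n => by
    have := (hFc n).continuous_fderiv (by simp)
    unfold gradient
    exact (LinearIsometryEquiv.continuous _).comp this
  have L1 : Tendsto (fun n => ∫ y, F n y * Real.log (F n y) ∂gaussMeasure d σ) atTop
      (𝓝 (∫ y, f y * Real.log (f y) ∂gaussMeasure d σ)) := by
    refine tendsto_integral_of_dominated_convergence (fun y => 2 * ‖f y * Real.log (f y)‖ + 3)
      (fun n => ?_) ((hint2.norm.const_mul 2).add (integrable_const _))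
      (fun n => ae_of_all _ fun y => tlogt_bound (hFpos n y) (hfpos y) (hFle n y))
      (ae_of_all _ fun y => ?_)
    · exact (Real.continuous_mul_log.comp (hFc n).continuous).aestronglyMeasurable
    · exact (Real.continuous_mul_log.tendsto _).comp (hFlim y)
  have L2 : Tendsto (fun n => ∫ y, F n y ∂gaussMeasure d σ) atTop
      (𝓝 (∫ y, f y ∂gaussMeasure d σ)) := by
    refine tendsto_integral_of_dominated_convergence (fun y => f y + 1)
      (fun n => (hFc n).continuous.aestronglyMeasurable) (hint1.add (integrable_const _))
      (fun n => ae_of_all _ fun y => ?_) (ae_of_all _ fun y => hFlim y)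
    rw [Real.norm_of_nonneg (hFpos n y).le]; exact hFle n y
  have L3 : Tendsto (fun n => ∫ y, ‖gradient (F n) y‖ ^ 2 / F n y ∂gaussMeasure d σ) atTop
      (𝓝 (∫ y, ‖gradient f y‖ ^ 2 / f y ∂gaussMeasure d σ)) := by
    have hdom : Integrable (fun y => 2 * (‖gradient f y‖ ^ 2 / f y) + 8 * C ^ 2 * f y)
        (gaussMeasure d σ) := (hint3.const_mul 2).add (hint1.const_mul (8 * C ^ 2))
    refine tendsto_integral_of_dominated_convergence
      (fun y => 2 * (‖gradient f y‖ ^ 2 / f y) + 8 * C ^ 2 * f y)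
      (fun n => ?_) hdom
      (fun n => ae_of_all _ fun y => ?_) (ae_of_all _ fun y => ?_)
    · exact (((hgc n).norm.pow 2).div (hFc n).continuous
        fun y => (hFpos n y).ne').aestronglyMeasurable
    · have := hFpos n y
      rw [Real.norm_of_nonneg (by positivity)]; exact hGb n y
    · have h1 : Tendsto (fun n => ‖gradient f y‖ ^ 2 / F n y) atTop (𝓝 (‖gradient f y‖ ^ 2 / f y)) :=
        tendsto_const_nhds.div (hFlim y) (hfpos y).ne'
      refine h1.congr' ?_
      filter_upwards [hGe y] with n hn
      rw [hn]
  have L4 := (Real.continuous_mul_log.tendsto _).comp L2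
  exact le_of_tendsto_of_tendsto' L1 (L4.add (L3.const_mul (σ / 2))) key

end main

end GaussLSI

/-- Logarithmic Sobolev inequality for the Gaussian measure of variance σ:
Ent_{γ_σ}(f) ≤ (σ/2) ∫ |∇f|²/f dγ_σ. -/
theorem stmt18 (d : ℕ) (σ : ℝ) (hσ : 0 < σ)
    (f : EuclideanSpace ℝ (Fin d) → ℝ) (hf : ContDiff ℝ (⊤ : ℕ∞) f)
    (hfpos : ∀ y, 0 < f y)
    (hint1 : Integrable f (gaussMeasure d σ))
    (hint2 : Integrable (fun y => f y * Real.log (f y)) (gaussMeasure d σ))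
    (hint3 : Integrable (fun y => ‖gradient f y‖ ^ 2 / f y) (gaussMeasure d σ)) :
    (∫ y, f y * Real.log (f y) ∂gaussMeasure d σ)
        - (∫ y, f y ∂gaussMeasure d σ) * Real.log (∫ y, f y ∂gaussMeasure d σ)
      ≤ σ / 2 * ∫ y, ‖gradient f y‖ ^ 2 / f y ∂gaussMeasure d σ := by
  have h := GaussLSI.lsi hσ f hf hfpos hint1 hint2 hint3
  linarith
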